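/- arXiv:2106.06864 — 2 statements merged into one kernel-verified Lean document; each statement's English description precedes it below -/
import Mathlib

section
/- Let (a_1, a_2, a_3) be a triple of nonnegative integers with a_1 + a_2 + a_3 even. Then N(a_1, a_2, a_3) ≠ 0 (i.e., there is a path within 3 glass plates corresponding to (a_1, a_2, a_3)) if and only if a_1 + a_2 ≥ a_3, a_2 + a_3 ≥ a_1, and a_3 + a_1 ≥ a_2. -/
/-- A word (list over `ℕ`) is down-up alternating if `w 1 > w 2 < w 3 > w 4 < ⋯`
(1-indexed). -/
def DownUpAlt (w : List ℕ) : Prop :=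
  ∀ k : ℕ, k + 1 < w.length →
    if k % 2 = 0 then w.getD (k + 1) 0 < w.getD k 0 else w.getD k 0 < w.getD (k + 1) 0

/-- `N3 a b c` is the number of down-up alternating words over `{1,2,3}` that are
empty or have first letter `≥ 2`, containing exactly `a` ones, `b` twos and
`c` threes. -/
noncomputable def N3 (a b c : ℕ) : ℕ :=
  Nat.card {w : List ℕ // (∀ x ∈ w, 1 ≤ x ∧ x ≤ 3) ∧ DownUpAlt w ∧
    (w = [] ∨ 2 ≤ w.headI) ∧
    w.count 1 = a ∧ w.count 2 = b ∧ w.count 3 = c}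

/-! A down-up alternating word of even length splits into descents `w 1 > w 2`, `w 3 > w 4`, …,
each of which uses a given letter at most once; so no letter fills more than half of the word.
Conversely, sort the letters as `u 1 ≤ ⋯ ≤ u (2n)`. If no letter occurs more than `n` times, then
`u i < u (n + i)`, and `u (n + 1), u 1, u (n + 2), u 2, …, u (2n), u n` is down-up alternating
because `u i < u (n + i) ≤ u (n + i + 1)`. This works over any set of letters; for three letters,
the triangle inequalities say that none of them fills more than half of the word. -/

theorem downUpAlt_nil : DownUpAlt [] := fun _ hk => absurd hk (Nat.not_lt_zero _)

theorem downUpAlt_cons_cons {x y : ℕ} {t : List ℕ} :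
    DownUpAlt (x :: y :: t) ↔ y < x ∧ (∀ z ∈ t.head?, y < z) ∧ DownUpAlt t := by
  constructor
  · intro h
    refine ⟨by simpa using h 0 (by simp), ?_, fun k hk => ?_⟩
    · cases t with
      | nil => simp
      | cons z t => simpa using h 1 (by simp)
    · have := h (k + 2) (by simp only [List.length_cons]; omega)
      simpa [Nat.add_right_comm k 2 1] using this
  · rintro ⟨hyx, hy, ht⟩ k hk
    match k with
    | 0 => simpa using hyx
    | 1 =>
      cases t with
      | nil => simp at hk
      | cons z t => simpa using hy
    | k + 2 =>
      have := ht k (by simp only [List.length_cons] at hk; omega)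
      simpa [Nat.add_right_comm k 2 1] using this

theorem DownUpAlt.two_mul_count_le_length (a : ℕ) :
    ∀ {w : List ℕ}, DownUpAlt w → Even w.length → 2 * w.count a ≤ w.length
  | [], _, _ => by simp
  | [_], _, he => by simp at he
  | x :: y :: t, h, he => by
    obtain ⟨hyx, -, ht⟩ := downUpAlt_cons_cons.mp h
    have ih := ht.two_mul_count_le_length a (by simpa [Nat.even_add_one] using he)
    simp only [List.count_cons, List.length_cons, beq_iff_eq]
    split_ifs <;> omega

theorem DownUpAlt.eq_nil_or_two_le_headI {w : List ℕ} (hw : DownUpAlt w) (he : Even w.length)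
    (hpos : ∀ x ∈ w, 0 < x) : w = [] ∨ 2 ≤ w.headI := by
  match w with
  | [] => exact .inl rfl
  | [_] => simp at he
  | x :: y :: t =>
    have hyx : y < x := (downUpAlt_cons_cons.mp hw).1
    have hy : 0 < y := hpos y (by simp)
    exact .inr (by simp only [List.headI_cons]; omega)

section Riffle

open scoped List

variable {α : Type*}

/-- The perfect shuffle `x 1, y 1, x 2, y 2, …` of two lists, stopping when either list runs out.
It builds an alternating word from its peaks `x i` and its valleys `y i`. -/
def riffle : List α → List α → List α
  | x :: xs, y :: ys => x :: y :: riffle xs ys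
  | _, _ => []

theorem riffle_perm_append :
    ∀ {xs ys : List α}, xs.length = ys.length → riffle xs ys ~ xs ++ ys
  | [], [], _ => .refl _
  | x :: _, y :: _, h =>
    ((riffle_perm_append (Nat.succ.inj h)).cons y |>.trans List.perm_middle.symm).cons x

theorem riffle_drop_take_perm {l : List α} {n : ℕ} (hlen : l.length = n + n) :
    riffle (l.drop n) (l.take n) ~ l :=
  calc riffle (l.drop n) (l.take n)
    _ ~ l.drop n ++ l.take n := riffle_perm_append (by simp [hlen])
    _ ~ l.take n ++ l.drop n := List.perm_append_comm
    _ = l := List.take_append_drop n l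

theorem mem_of_mem_head?_riffle {xs ys : List α} {z : α} (hz : z ∈ (riffle xs ys).head?) :
    z ∈ xs := by
  match xs, ys with
  | _ :: _, _ :: _ => simp_all [riffle]
  | [], _ => simp [riffle] at hz
  | _ :: _, [] => simp [riffle] at hz

end Riffle

theorem downUpAlt_riffle {xs ys : List ℕ} (hlt : List.Forall₂ (· < ·) ys xs)
    (hxs : xs.SortedLE) : DownUpAlt (riffle xs ys) := by
  induction hlt with
  | nil => exact downUpAlt_nil
  | @cons y x ys xs hyx _ ih =>
    obtain ⟨hx, hxs⟩ := List.pairwise_cons.mp hxs.pairwise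
    exact downUpAlt_cons_cons.mpr
      ⟨hyx, fun z hz => hyx.trans_le (hx z (mem_of_mem_head?_riffle hz)), ih hxs.sortedLE⟩

theorem getElem_lt_getElem_add_of_count_le {α : Type*} [LinearOrder α] {l : List α} {n i : ℕ}
    (hl : l.SortedLE) (hi : i + n < l.length) (hn : l.count l[i] ≤ n) : l[i] < l[i + n] := by
  by_contra! hle
  have hblock : (l.drop i).take (n + 1) = List.replicate (n + 1) l[i] := by
    refine List.ext_getElem (by simp; omega) fun j hj _ => ?_
    simp only [List.length_take, List.length_drop] at hj
    simp only [List.getElem_take, List.getElem_drop, List.getElem_replicate]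
    exact le_antisymm ((hl.getElem_le_getElem_of_le (by omega)).trans hle)
      (hl.getElem_le_getElem_of_le (by omega))
  have hcount : n + 1 ≤ l.count l[i] := List.replicate_sublist_iff.mp <|
    hblock ▸ (List.take_sublist _ _).trans (List.drop_sublist _ _)
  omega

theorem forall₂_take_lt_drop {α : Type*} [LinearOrder α] {l : List α} {n : ℕ}
    (hl : l.SortedLE) (hlen : l.length = n + n) (hn : ∀ a, l.count a ≤ n) :
    List.Forall₂ (· < ·) (l.take n) (l.drop n) := by
  refine List.forall₂_iff_get.mpr ⟨by simp [hlen], fun i hi _ => ?_⟩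
  have hin : i + n < l.length := by
    rw [List.length_take] at hi
    omega
  simpa [Nat.add_comm n i] using getElem_lt_getElem_add_of_count_le hl hin (hn _)

theorem exists_downUpAlt_iff {s : Multiset ℕ} (hs : Even s.card) :
    (∃ w : List ℕ, (w : Multiset ℕ) = s ∧ DownUpAlt w) ↔ ∀ a, 2 * s.count a ≤ s.card := by
  constructor
  · rintro ⟨w, rfl, hw⟩ a
    rw [Multiset.coe_count, Multiset.coe_card]
    exact hw.two_mul_count_le_length a hs
  · intro hcount
    obtain ⟨n, hn⟩ := hs
    obtain ⟨l, hl, rfl⟩ : ∃ l : List ℕ, l.Pairwise (· ≤ ·) ∧ (l : Multiset ℕ) = s :=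
      ⟨s.sort, s.pairwise_sort _, s.sort_eq _⟩
    simp only [Multiset.coe_card, Multiset.coe_count] at hn hcount
    have hle (a : ℕ) : l.count a ≤ n := by
      have := hcount a
      omega
    exact ⟨riffle (l.drop n) (l.take n), Multiset.coe_eq_coe.mpr (riffle_drop_take_perm hn),
      downUpAlt_riffle (forall₂_take_lt_drop hl.sortedLE hn hle) hl.drop.sortedLE⟩

/-- The words of the reflection paths with exactly `s.count i` reflections at plate `i`. The plates
are numbered from `1`, so `s` should not contain `0`; their number is not bounded. -/
def reflectionWords (s : Multiset ℕ) : Set (List ℕ) :=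
  {w | (w : Multiset ℕ) = s ∧ DownUpAlt w ∧ (w = [] ∨ 2 ≤ w.headI)}

theorem finite_reflectionWords (s : Multiset ℕ) : (reflectionWords s).Finite :=
  s.lists.finite_toSet.subset fun _ hw => (Multiset.mem_lists_iff s _).mpr hw.1.symm

theorem stmt17_general {s : Multiset ℕ} (hpos : ∀ x ∈ s, 0 < x) (hs : Even s.card) :
    (reflectionWords s).ncard ≠ 0 ↔ ∀ a, 2 * s.count a ≤ s.card := by
  rw [← Nat.pos_iff_ne_zero, Set.ncard_pos (finite_reflectionWords s), ← exists_downUpAlt_iff hs]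
  constructor
  · rintro ⟨w, hws, hw, -⟩
    exact ⟨w, hws, hw⟩
  · rintro ⟨w, rfl, hw⟩
    exact ⟨w, rfl, hw, hw.eq_nil_or_two_le_headI hs hpos⟩

section ThreePlates

variable (a b c : ℕ)

/-- The multiset of `a` ones, `b` twos and `c` threes, the letters of the words counted by
`N3 a b c`. -/
def threePlates : Multiset ℕ :=
  .replicate a 1 + .replicate b 2 + .replicate c 3

theorem card_threePlates : (threePlates a b c).card = a + b + c := by
  simp [threePlates]

theorem count_threePlates (x : ℕ) : (threePlates a b c).count x =
    if x = 1 then a else if x = 2 then b else if x = 3 then c else 0 := by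
  simp only [threePlates, Multiset.count_add, Multiset.count_replicate]
  split_ifs <;> omega

variable {a b c}

theorem one_le_and_le_three_of_mem_threePlates {x : ℕ} (hx : x ∈ threePlates a b c) :
    1 ≤ x ∧ x ≤ 3 := by
  simp only [threePlates, Multiset.mem_add, Multiset.mem_replicate] at hx
  omega

theorem coe_eq_threePlates_iff {w : List ℕ} : (w : Multiset ℕ) = threePlates a b c ↔
    (∀ x ∈ w, 1 ≤ x ∧ x ≤ 3) ∧ w.count 1 = a ∧ w.count 2 = b ∧ w.count 3 = c := by
  constructor
  · intro h
    refine ⟨fun x hx => one_le_and_le_three_of_mem_threePlates (h ▸ Multiset.mem_coe.mpr hx), ?_⟩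
    simp [← Multiset.coe_count, h, count_threePlates]
  · rintro ⟨hw, rfl, rfl, rfl⟩
    ext x
    rw [count_threePlates, Multiset.coe_count]
    split_ifs with h1 h2 h3
    · rw [h1]
    · rw [h2]
    · rw [h3]
    · exact List.count_eq_zero_of_not_mem fun hx => by have := hw x hx; omega

theorem forall_two_mul_count_threePlates_le_iff :
    (∀ x, 2 * (threePlates a b c).count x ≤ (threePlates a b c).card) ↔
      c ≤ a + b ∧ a ≤ b + c ∧ b ≤ c + a := by
  simp only [count_threePlates, card_threePlates]
  constructor
  · intro h
    have h1 := h 1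
    have h2 := h 2
    have h3 := h 3
    norm_num at h1 h2 h3
    omega
  · intro h x
    split_ifs <;> omega

theorem N3_eq_ncard_reflectionWords : N3 a b c = (reflectionWords (threePlates a b c)).ncard := by
  rw [N3, ← Nat.card_coe_set_eq]
  refine Nat.card_congr (Equiv.subtypeEquivRight fun w => ?_)
  simp only [reflectionWords, Set.mem_ofPred_eq, coe_eq_threePlates_iff]
  tauto

end ThreePlates

theorem stmt17 (a1 a2 a3 : ℕ) (h : Even (a1 + a2 + a3)) :
    N3 a1 a2 a3 ≠ 0 ↔ a3 ≤ a1 + a2 ∧ a1 ≤ a2 + a3 ∧ a2 ≤ a3 + a1 := by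
  rw [N3_eq_ncard_reflectionWords,
    stmt17_general (fun x hx => (one_le_and_le_three_of_mem_threePlates hx).1)
      ((card_threePlates a1 a2 a3).symm ▸ h),
    forall_two_mul_count_threePlates_le_iff]
end

section
/- For every integer n ≥ 1, the number of triples (a_1, a_2, a_3) of nonnegative integers with a_1 + a_2 + a_3 = 2n + 1 and N(a_1, a_2, a_3) ≠ 0 equals C(n+2, 2) + 1, where C denotes the binomial coefficient. -/
/-!
In an alternating word neighbouring letters differ, so a letter fills at most half of the positions,
rounded up. If the length is odd and the letter `x` attains this bound, it sits at every peak, so no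
letter exceeds `x`. Hence in a word of length `2n + 1` whose first letter is at least `2` there are
at most `n` ones, at most `n + 1` threes, and at most `n` twos unless the word is `2 1 2 1 ⋯ 2`.
Conversely, if `p + q + r = n` then `(2 1)^p (3 2)^q (3 1)^r 3` contains `p + r` ones, `p + q` twos
and `q + r + 1` threes, and these are all the contents allowed by the bounds. There are
`C(n + 2, 2)` such triples `(p, q, r)`, and the word `2 1 2 1 ⋯ 2` contributes one more content.
-/

theorem two_mul_count_le_length_add_one_of_isChain_ne {α : Type*} [DecidableEq α] (x : α) :
    ∀ {w : List α}, w.IsChain (· ≠ ·) → 2 * w.count x ≤ w.length + 1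
  | [], _ => by simp
  | [a], _ => by
    have : [a].count x ≤ 1 := List.count_le_length
    simp only [List.length_singleton]
    omega
  | a :: b :: t, h => by
    obtain ⟨hab, ht⟩ := List.isChain_cons_cons.1 h
    have ih := two_mul_count_le_length_add_one_of_isChain_ne x ht.tail
    simp only [List.tail_cons] at ih
    have hpair : (if a = x then 1 else 0) + (if b = x then 1 else 0) ≤ 1 := by grind
    simp only [List.count_cons, beq_iff_eq, List.length_cons]
    omega

theorem downUpAlt_cons_cons_cons {x y z : ℕ} {t : List ℕ} :
    DownUpAlt (x :: y :: z :: t) ↔ y < x ∧ y < z ∧ DownUpAlt (z :: t) := by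
  constructor
  · intro h
    refine ⟨by simpa using h 0 (by simp), by simpa using h 1 (by simp), fun k hk => ?_⟩
    simpa using h (k + 2) (by simpa using hk)
  · rintro ⟨hyx, hyz, h⟩ k hk
    match k with
    | 0 => simpa using hyx
    | 1 => simpa using hyz
    | k + 2 => simpa using h k (by simpa using hk)

theorem downUpAlt_singleton (x : ℕ) : DownUpAlt [x] := fun k hk => by simp at hk

namespace DownUpAlt

variable {w : List ℕ} {x y : ℕ}

theorem cons_cons (hw : DownUpAlt w) (hyx : y < x) (hyw : y < w.headI) :
    DownUpAlt (x :: y :: w) := by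
  cases w with
  | nil => exact absurd hyw (Nat.not_lt_zero y)
  | cons z t => exact downUpAlt_cons_cons_cons.2 ⟨hyx, hyw, hw⟩

theorem isChain_ne (hw : DownUpAlt w) : w.IsChain (· ≠ ·) := by
  refine List.isChain_iff_getElem.2 fun k hk => ?_
  have hstep := hw k hk
  rw [List.getD_eq_getElem _ _ hk, List.getD_eq_getElem _ _ (Nat.lt_of_succ_lt hk)] at hstep
  split_ifs at hstep
  exacts [hstep.ne', hstep.ne]

theorem two_mul_count_le (hw : DownUpAlt w) (x : ℕ) : 2 * w.count x ≤ w.length + 1 :=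
  two_mul_count_le_length_add_one_of_isChain_ne x hw.isChain_ne

theorem forall_mem_le_of_two_mul_count_eq :
    ∀ {w : List ℕ}, DownUpAlt w → 2 * w.count x = w.length + 1 → ∀ y ∈ w, y ≤ x
  | [], _, hcount => by simp at hcount
  | [a], _, hcount => by
    have hax : a = x := by
      by_contra hne
      simp [hne] at hcount
    simp [hax]
  | [a, b], _, hcount => by
    simp only [List.length_cons, List.length_nil] at hcount
    omega
  | a :: b :: c :: t, hw, hcount => by
    obtain ⟨hba, hbc, ht⟩ := downUpAlt_cons_cons_cons.1 hw
    have hbound := ht.two_mul_count_le x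
    rw [List.count_cons, List.count_cons, List.length_cons, List.length_cons] at hcount
    simp only [beq_iff_eq] at hcount
    have hpair : (if a = x then 1 else 0) + (if b = x then 1 else 0) ≤ 1 := by grind
    have hcount' : 2 * (c :: t).count x = (c :: t).length + 1 := by omega
    have ih := ht.forall_mem_le_of_two_mul_count_eq hcount'
    have hcx : c ≤ x := ih c List.mem_cons_self
    have hbx : b < x := hbc.trans_le hcx
    have hax : a = x := by
      by_contra hax
      rw [if_neg hax, if_neg hbx.ne] at hcount
      omega
    exact List.forall_mem_cons.2 ⟨hax.le, List.forall_mem_cons.2 ⟨hbx.le, ih⟩⟩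

end DownUpAlt

/-- The word `(x y)^k w`, that is, `w` preceded by `k` copies of the factor `x y`. -/
def prependPairs {α : Type*} (k : ℕ) (x y : α) (w : List α) : List α :=
  (List.replicate k [x, y]).flatten ++ w

section prependPairs

variable {α : Type*} {k : ℕ} {x y : α} {w : List α}

theorem prependPairs_succ : prependPairs (k + 1) x y w = x :: y :: prependPairs k x y w := rfl

theorem count_prependPairs [DecidableEq α] (z : α) :
    (prependPairs k x y w).count z = k * [x, y].count z + w.count z := by
  simp [prependPairs, List.count_flatten]

theorem forall_mem_prependPairs {P : α → Prop} (hx : P x) (hy : P y) (hw : ∀ u ∈ w, P u) :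
    ∀ u ∈ prependPairs k x y w, P u := by
  induction k with
  | zero => exact hw
  | succ k ih =>
    rw [prependPairs_succ, List.forall_mem_cons, List.forall_mem_cons]
    exact ⟨hx, hy, ih⟩

theorem lt_headI_prependPairs [Inhabited α] [LT α] {z : α} (hx : z < x) (hw : z < w.headI) :
    z < (prependPairs k x y w).headI := by
  cases k with
  | zero => exact hw
  | succ k => exact hx

end prependPairs

theorem DownUpAlt.prependPairs {k x y : ℕ} {w : List ℕ} (hw : DownUpAlt w) (hyx : y < x)
    (hyw : y < w.headI) : DownUpAlt (prependPairs k x y w) := by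
  induction k with
  | zero => exact hw
  | succ k ih =>
    rw [prependPairs_succ]
    exact ih.cons_cons hyx (lt_headI_prependPairs hyx hyw)

/-- The words counted by `N3 a b c`: they encode the reflection paths with `a`, `b` and `c`
reflections at the three plates. -/
def IsReflectionWord (a b c : ℕ) (w : List ℕ) : Prop :=
  (∀ x ∈ w, 1 ≤ x ∧ x ≤ 3) ∧ DownUpAlt w ∧ (w = [] ∨ 2 ≤ w.headI) ∧
    w.count 1 = a ∧ w.count 2 = b ∧ w.count 3 = c

theorem IsReflectionWord.length_eq {a b c : ℕ} {w : List ℕ} (hw : IsReflectionWord a b c w) :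
    w.length = a + b + c := by
  obtain ⟨hletters, -, -, rfl, rfl, rfl⟩ := hw
  have hsum := Multiset.sum_count_eq_card (s := Finset.Icc 1 3) (m := (w : Multiset ℕ))
    fun x hx => Finset.mem_Icc.2 (hletters x hx)
  simpa [Finset.sum_Icc_succ_top] using hsum.symm

theorem finite_setOf_length_eq_and_forall_mem {α : Type*} {s : Set α} (hs : s.Finite) (m : ℕ) :
    {w : List α | w.length = m ∧ ∀ x ∈ w, x ∈ s}.Finite := by
  have := hs.to_subtype
  refine ((List.finite_length_eq s m).image (List.map Subtype.val)).subset ?_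
  rintro w ⟨hlen, hmem⟩
  lift w to List s using hmem
  exact ⟨w, by simpa using hlen, rfl⟩

theorem finite_setOf_isReflectionWord (a b c : ℕ) : {w | IsReflectionWord a b c w}.Finite :=
  (finite_setOf_length_eq_and_forall_mem (Set.finite_Icc 1 3) (a + b + c)).subset fun _ hw =>
    ⟨hw.length_eq, hw.1⟩

theorem n3_ne_zero_iff_exists {a b c : ℕ} : N3 a b c ≠ 0 ↔ ∃ w, IsReflectionWord a b c w := by
  change Nat.card {w // IsReflectionWord a b c w} ≠ 0 ↔ _
  rw [Nat.card_ne_zero, nonempty_subtype]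
  exact and_iff_left (finite_setOf_isReflectionWord a b c)

theorem IsReflectionWord.content_bounds {n a b c : ℕ} {w : List ℕ}
    (hw : IsReflectionWord a b c w) (hsum : a + b + c = 2 * n + 1) :
    (a = n ∧ b = n + 1 ∧ c = 0) ∨ (a ≤ n ∧ b ≤ n ∧ c ≤ n + 1) := by
  have hlen : w.length = 2 * n + 1 := hw.length_eq.trans hsum
  obtain ⟨-, halt, hhead, rfl, rfl, rfl⟩ := hw
  have hne : w ≠ [] := by
    rintro rfl
    simp at hlen
  have hhead_mem : w.headI ∈ w := by
    obtain ⟨x, t, rfl⟩ := List.exists_cons_of_ne_nil hne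
    exact List.mem_cons_self
  have hones_ne : w.count 1 ≠ n + 1 := fun h => by
    have hle := halt.forall_mem_le_of_two_mul_count_eq (x := 1) (by omega) w.headI hhead_mem
    have := hhead.resolve_left hne
    omega
  have hno_threes : w.count 2 = n + 1 → w.count 3 = 0 := fun h => by
    have hle := halt.forall_mem_le_of_two_mul_count_eq (x := 2) (by omega)
    exact List.count_eq_zero.2 fun hmem => absurd (hle 3 hmem) (by simp)
  have := halt.two_mul_count_le 1
  have := halt.two_mul_count_le 2
  have := halt.two_mul_count_le 3
  omega

theorem isReflectionWord_two_one_pow_two (n : ℕ) :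
    IsReflectionWord n (n + 1) 0 (prependPairs n 2 1 [2]) := by
  refine ⟨forall_mem_prependPairs (by decide) (by decide) (by simp),
    (downUpAlt_singleton 2).prependPairs (by simp) (by simp),
    Or.inr (Nat.succ_le_of_lt (lt_headI_prependPairs (by simp) (by simp))), ?_, ?_, ?_⟩ <;>
  simp [count_prependPairs]

theorem isReflectionWord_prependPairs_three (p q r : ℕ) :
    IsReflectionWord (p + r) (p + q) (q + r + 1)
      (prependPairs p 2 1 (prependPairs q 3 2 (prependPairs r 3 1 [3]))) := by
  have hhead_r : 2 < (prependPairs r 3 1 [3]).headI := lt_headI_prependPairs (by simp) (by simp)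
  have hhead_q : 2 < (prependPairs q 3 2 (prependPairs r 3 1 [3])).headI :=
    lt_headI_prependPairs (by simp) hhead_r
  have halt_r : DownUpAlt (prependPairs r 3 1 [3]) :=
    (downUpAlt_singleton 3).prependPairs (by simp) (by simp)
  have halt_q : DownUpAlt (prependPairs q 3 2 (prependPairs r 3 1 [3])) :=
    halt_r.prependPairs (by simp) hhead_r
  refine ⟨?_, halt_q.prependPairs (by simp) (by omega),
    Or.inr (Nat.succ_le_of_lt (lt_headI_prependPairs (by simp) (by omega))), ?_, ?_, ?_⟩
  · iterate 3 refine forall_mem_prependPairs (by decide) (by decide) ?_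
    simp
  all_goals simp [count_prependPairs, add_assoc]

theorem n3_ne_zero_iff_of_sum_eq {n a b c : ℕ} (hsum : a + b + c = 2 * n + 1) :
    N3 a b c ≠ 0 ↔ (a = n ∧ b = n + 1 ∧ c = 0) ∨ (a ≤ n ∧ b ≤ n ∧ c ≤ n + 1) := by
  rw [n3_ne_zero_iff_exists]
  constructor
  · rintro ⟨w, hw⟩
    exact hw.content_bounds hsum
  · rintro (⟨rfl, rfl, rfl⟩ | ⟨ha, hb, hc⟩)
    · exact ⟨_, isReflectionWord_two_one_pow_two a⟩
    · have hword := isReflectionWord_prependPairs_three (n + 1 - c) (n - a) (n - b)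
      rw [show n + 1 - c + (n - b) = a by omega, show n + 1 - c + (n - a) = b by omega,
        show n - a + (n - b) + 1 = c by omega] at hword
      exact ⟨_, hword⟩

/-- The contents `(p + r, p + q, q + r + 1)` of the words `(2 1)^p (3 2)^q (3 1)^r 3` with
`p + q + r = n`; the triple `(p, q, r)` is encoded as a function on `Fin 3`. -/
def boundedContents (n : ℕ) : Finset (ℕ × ℕ × ℕ) :=
  ((Finset.univ : Finset (Fin 3)).finsuppAntidiag n).image fun f =>
    (f 0 + f 2, f 0 + f 1, f 1 + f 2 + 1)

theorem mem_boundedContents {n a b c : ℕ} : (a, b, c) ∈ boundedContents n ↔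
    a + b + c = 2 * n + 1 ∧ a ≤ n ∧ b ≤ n ∧ c ≤ n + 1 := by
  simp only [boundedContents, Finset.mem_image, Finset.mem_finsuppAntidiag, Fin.sum_univ_three,
    Finset.subset_univ, and_true, Prod.mk.injEq]
  constructor
  · rintro ⟨f, hf, rfl, rfl, rfl⟩
    omega
  · rintro ⟨hsum, ha, hb, hc⟩
    refine ⟨Finsupp.equivFunOnFinite.symm ![n + 1 - c, n - a, n - b], ?_⟩
    simp only [Finsupp.equivFunOnFinite_symm_apply_apply, Matrix.cons_val]
    omega

theorem card_boundedContents (n : ℕ) : (boundedContents n).card = (n + 2).choose 2 := by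
  have hinj : Function.Injective fun f : Fin 3 →₀ ℕ => (f 0 + f 2, f 0 + f 1, f 1 + f 2 + 1) := by
    intro f g hfg
    simp only [Prod.mk.injEq] at hfg
    ext i
    fin_cases i <;> simp only [Fin.reduceFinMk, Fin.zero_eta, Fin.mk_one] <;> omega
  calc (boundedContents n).card
      = ((Finset.univ : Finset (Fin 3)).finsuppAntidiag n).card :=
        Finset.card_image_of_injective _ hinj
    _ = (n + 2).choose n := by
        rw [Finset.card_finsuppAntidiag_nat_eq_choose, Finset.card_fin,
          show 3 + n - 1 = n + 2 by omega]
    _ = (n + 2).choose 2 := Nat.choose_symm_add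

theorem stmt19 (n : ℕ) (hn : 1 ≤ n) :
    Nat.card {t : ℕ × ℕ × ℕ //
      t.1 + t.2.1 + t.2.2 = 2 * n + 1 ∧ N3 t.1 t.2.1 t.2.2 ≠ 0} =
      Nat.choose (n + 2) 2 + 1 := by
  have hmem : (n, n + 1, 0) ∉ boundedContents n := by
    rw [mem_boundedContents]
    omega
  rw [← card_boundedContents, ← Finset.card_insert_of_notMem hmem]
  refine Nat.subtype_card _ fun ⟨a, b, c⟩ => ?_
  have hcontent := n3_ne_zero_iff_of_sum_eq (n := n) (a := a) (b := b) (c := c)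
  rw [Finset.mem_insert, mem_boundedContents, Prod.mk.injEq, Prod.mk.injEq,
    and_congr_right hcontent]
  omega
end
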